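/- Strong completeness of EL: for every formula φ and every set Φ of formulas of the language EL, if Φ semantically entails φ over similarity models (every pointed similarity model satisfying all formulas of Φ satisfies φ), then Φ ⊢_EL φ (i.e., there is a finite subset {ψ_1,…,ψ_n} ⊆ Φ such that (ψ_1 ∧ … ∧ ψ_n) → φ is a theorem of EL). -/

import Mathlib

/-- Formulas of the language EL over a set `Ag` of agents, with
propositional variables drawn from the countably infinite set `ℕ`.  Groups
are nonempty finite sets of agents. -/
inductive Formula (Ag : Type) : Type
  | atom : ℕ → Formula Ag
  | neg  : Formula Ag → Formula Ag
  | impl : Formula Ag → Formula Ag → Formula Ag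
  | K    : Ag → Formula Ag → Formula Ag

/-- A similarity model `(W, A, E, C, ν)`. -/
structure SimModel (Ag : Type) where
  W : Type
  A : Type
  w_nonempty : Nonempty W
  E : W → W → Set A
  Cap : Ag → Set A
  val : W → Set ℕ
  positivity : ∀ s t : W, E s t = Set.univ → s = t
  symmetry : ∀ s t : W, E s t = E t s

/-- Satisfaction on similarity models. -/
def SimModel.sat {Ag : Type} (M : SimModel Ag) : M.W → Formula Ag → Prop
  | s, .atom p => p ∈ M.val s
  | s, .neg φ => ¬ M.sat s φ
  | s, .impl φ ψ => M.sat s φ → M.sat s ψ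
  | s, .K a φ => ∀ t, M.Cap a ⊆ M.E s t → M.sat t φ

namespace Formula
/-- Conjunction, defined from the primitive connectives. -/
def and {Ag : Type} (φ ψ : Formula Ag) : Formula Ag := .neg (φ.impl ψ.neg)
/-- A fixed tautology. -/
def top {Ag : Type} : Formula Ag := (atom 0).impl (atom 0)
/-- Biconditional, defined from the primitive connectives. -/
def iff {Ag : Type} (φ ψ : Formula Ag) : Formula Ag := (φ.impl ψ).and (ψ.impl φ)
end Formula

/-- `φ` is a propositional tautology: it evaluates to `true` under every
assignment of truth values to formulas that respects negation and implication
(thereby treating atoms and modal formulas as propositional atoms). -/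
def IsTautology {Ag : Type} (φ : Formula Ag) : Prop :=
  ∀ v : Formula Ag → Bool,
    (∀ ψ : Formula Ag, v ψ.neg = !v ψ) →
    (∀ ψ χ : Formula Ag, v (ψ.impl χ) = (!v ψ || v χ)) →
    v φ = true

/-- The axiomatic system EL: the least set of formulas containing all propositional tautologies, closed under modus ponens and necessitation for each `K_a`, and containing the axiom schemes K and B. -/
inductive Prov {Ag : Type} : Formula Ag → Prop
  | taut {φ : Formula Ag} : IsTautology φ → Prov φ
  | mp {φ ψ : Formula Ag} : Prov (φ.impl ψ) → Prov φ → Prov ψ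
  | nec {φ : Formula Ag} (a : Ag) : Prov φ → Prov (.K a φ)
  | kK {φ ψ : Formula Ag} (a : Ag) :
      Prov ((Formula.K a (φ.impl ψ)).impl ((Formula.K a φ).impl (.K a ψ)))
  | axB {φ : Formula Ag} (a : Ag) :
      Prov (φ.impl (.K a (Formula.neg (.K a φ.neg))))

/-!
The proof is a canonical model construction. The maximal consistent sets, with `Γ` related to `Δ`
by `a` when every formula known by `a` in `Γ` belongs to `Δ`, form a Kripke model in which truth is
membership; axiom B makes its relations symmetric. Every symmetric Kripke model is in turn a
similarity model: take one ability per agent, together with one further ability for which no two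
states are ever similar. Since then `E s t` is never all of `A`, positivity holds.
-/

section Completeness

variable {Ag : Type} {Γ Δ : Set (Formula Ag)} {φ ψ χ : Formula Ag} {a : Ag}

namespace Formula

/-- Falsum, the negation of the fixed tautology `Formula.top`. -/
def bot : Formula Ag := neg top

end Formula

namespace IsTautology

theorem impl_self : IsTautology (φ.impl φ) :=
  fun v _ hi => by simp [hi]

theorem impl_impl_left : IsTautology (φ.impl (χ.impl φ)) :=
  fun v _ hi => by simp only [hi]; grind

theorem impl_distrib :
    IsTautology ((χ.impl (φ.impl ψ)).impl ((χ.impl φ).impl (χ.impl ψ))) :=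
  fun v _ hi => by simp only [hi]; grind

theorem neg_impl_impl : IsTautology (φ.neg.impl (φ.impl ψ)) :=
  fun v hn hi => by simp only [hn, hi]; grind

theorem impl_neg_neg : IsTautology (φ.impl φ.neg.neg) :=
  fun v hn hi => by simp only [hn, hi]; grind

theorem impl_bot_impl_neg : IsTautology ((φ.impl .bot).impl φ.neg) :=
  fun v hn hi => by simp only [Formula.bot, Formula.top, hn, hi]; grind

theorem neg_impl_bot_impl : IsTautology ((φ.neg.impl .bot).impl φ) :=
  fun v hn hi => by simp only [Formula.bot, Formula.top, hn, hi]; grind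

end IsTautology

theorem valuation_foldr_and (v : Formula Ag → Bool) (hn : ∀ ψ : Formula Ag, v ψ.neg = !v ψ)
    (hi : ∀ ψ χ : Formula Ag, v (ψ.impl χ) = (!v ψ || v χ)) (L : List (Formula Ag)) :
    v (L.foldr Formula.and Formula.top) = L.all v := by
  induction L with
  | nil => simp [Formula.top, hi]
  | cons ψ L ih => simp [Formula.and, hi, hn, ih]

/-- Derivability from a set `Γ` of local premises: modus ponens applies to premises and theorems of
EL alike, necessitation to theorems only. -/
inductive Derivable (Γ : Set (Formula Ag)) : Formula Ag → Prop
  | hyp {φ : Formula Ag} : φ ∈ Γ → Derivable Γ φ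
  | prov {φ : Formula Ag} : Prov φ → Derivable Γ φ
  | mp {φ ψ : Formula Ag} : Derivable Γ (φ.impl ψ) → Derivable Γ φ → Derivable Γ ψ

namespace Derivable

theorem taut (h : IsTautology φ) : Derivable Γ φ :=
  .prov (.taut h)

theorem mono (hΓΔ : Γ ⊆ Δ) (h : Derivable Γ φ) : Derivable Δ φ := by
  induction h with
  | hyp hmem => exact .hyp (hΓΔ hmem)
  | prov hprov => exact .prov hprov
  | mp _ _ ih_impl ih => exact .mp ih_impl ih

theorem impl_of_insert (h : Derivable (insert χ Γ) φ) : Derivable Γ (χ.impl φ) := by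
  induction h with
  | hyp hmem =>
    rcases hmem with rfl | hmem
    · exact taut .impl_self
    · exact .mp (taut .impl_impl_left) (.hyp hmem)
  | prov hprov => exact .mp (taut .impl_impl_left) (.prov hprov)
  | mp _ _ ih_impl ih => exact .mp (.mp (taut .impl_distrib) ih_impl) ih

theorem exists_mem_of_sUnion {c : Set (Set (Formula Ag))} (hne : c.Nonempty)
    (hdir : DirectedOn (· ⊆ ·) c) (h : Derivable (⋃₀ c) φ) : ∃ Γ ∈ c, Derivable Γ φ := by
  induction h with
  | hyp hmem =>
    obtain ⟨Γ, hΓ, hmem⟩ := hmem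
    exact ⟨Γ, hΓ, .hyp hmem⟩
  | prov hprov => exact hne.imp fun Γ hΓ => ⟨hΓ, .prov hprov⟩
  | mp _ _ ih_impl ih =>
    obtain ⟨Γ₁, hΓ₁, h_impl⟩ := ih_impl
    obtain ⟨Γ₂, hΓ₂, h⟩ := ih
    obtain ⟨Γ, hΓ, hle₁, hle₂⟩ := hdir Γ₁ hΓ₁ Γ₂ hΓ₂
    exact ⟨Γ, hΓ, .mp (h_impl.mono hle₁) (h.mono hle₂)⟩

theorem exists_list_prov (h : Derivable Γ φ) :
    ∃ L : List (Formula Ag), (∀ ψ ∈ L, ψ ∈ Γ) ∧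
      Prov ((L.foldr Formula.and Formula.top).impl φ) := by
  induction h with
  | @hyp φ hmem =>
    refine ⟨[φ], by simpa using hmem, .taut fun v hn hi => ?_⟩
    simp [hi, valuation_foldr_and v hn hi, -List.foldr_cons]
  | prov hprov => exact ⟨[], by simp, .mp (.taut .impl_impl_left) hprov⟩
  | mp _ _ ih_impl ih =>
    obtain ⟨L₁, hL₁, h_impl⟩ := ih_impl
    obtain ⟨L₂, hL₂, h⟩ := ih
    refine ⟨L₁ ++ L₂, fun χ hχ => (List.mem_append.1 hχ).elim (hL₁ χ) (hL₂ χ),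
      .mp (.mp (.taut fun v hn hi => ?_) h_impl) h⟩
    simp only [hi, valuation_foldr_and v hn hi, List.all_append]
    grind

end Derivable

/-- Consistency of a set of formulas: falsum is not derivable from it. -/
def Consistent (Γ : Set (Formula Ag)) : Prop := ¬ Derivable Γ .bot

/-- Maximal consistency, with respect to inclusion. -/
def IsMaximalConsistent (Γ : Set (Formula Ag)) : Prop := Maximal Consistent Γ

theorem Consistent.neg_notMem (hΓ : Consistent Γ) (h : Derivable Γ φ) : φ.neg ∉ Γ :=
  fun hneg => hΓ (.mp (.mp (.taut .neg_impl_impl) (.hyp hneg)) h)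

theorem consistent_insert_neg (h : ¬ Derivable Γ φ) : Consistent (insert φ.neg Γ) :=
  fun hbot => h (.mp (.taut .neg_impl_bot_impl) hbot.impl_of_insert)

theorem Consistent.exists_isMaximalConsistent (hΓ : Consistent Γ) :
    ∃ Δ, Γ ⊆ Δ ∧ IsMaximalConsistent Δ := by
  refine zorn_subset_nonempty {Δ | Consistent Δ} (fun c hc hchain hne => ?_) Γ hΓ
  refine ⟨⋃₀ c, fun hbot => ?_, fun Δ hΔ => Set.subset_sUnion_of_mem hΔ⟩
  obtain ⟨Δ, hΔ, hbot⟩ := hbot.exists_mem_of_sUnion hne hchain.directedOn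
  exact hc hΔ hbot

namespace IsMaximalConsistent

theorem consistent (hΓ : IsMaximalConsistent Γ) : Consistent Γ := hΓ.prop

theorem derivable_impl_bot (hΓ : IsMaximalConsistent Γ) (hφ : φ ∉ Γ) :
    Derivable Γ (φ.impl .bot) := by
  refine Derivable.impl_of_insert (by_contra fun hcons => hφ ?_)
  exact hΓ.le_of_ge hcons (Set.subset_insert φ Γ) (Set.mem_insert φ Γ)

theorem mem_of_derivable (hΓ : IsMaximalConsistent Γ) (h : Derivable Γ φ) : φ ∈ Γ :=
  by_contra fun hφ => hΓ.consistent (.mp (hΓ.derivable_impl_bot hφ) h)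

theorem neg_mem_iff (hΓ : IsMaximalConsistent Γ) : φ.neg ∈ Γ ↔ φ ∉ Γ :=
  ⟨fun hneg hφ => hΓ.consistent.neg_notMem (.hyp hφ) hneg,
    fun hφ => hΓ.mem_of_derivable (.mp (.taut .impl_bot_impl_neg) (hΓ.derivable_impl_bot hφ))⟩

theorem impl_mem_iff (hΓ : IsMaximalConsistent Γ) : φ.impl ψ ∈ Γ ↔ (φ ∈ Γ → ψ ∈ Γ) := by
  refine ⟨fun h hφ => hΓ.mem_of_derivable (.mp (.hyp h) (.hyp hφ)), fun h => ?_⟩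
  apply hΓ.mem_of_derivable
  by_cases hφ : φ ∈ Γ
  · exact .mp (.taut .impl_impl_left) (.hyp (h hφ))
  · exact .mp (.taut .neg_impl_impl) (.hyp (hΓ.neg_mem_iff.2 hφ))

end IsMaximalConsistent

theorem exists_isMaximalConsistent_notMem (h : ¬ Derivable Γ φ) :
    ∃ Δ, Γ ⊆ Δ ∧ IsMaximalConsistent Δ ∧ φ ∉ Δ := by
  obtain ⟨Δ, hsub, hΔ⟩ := (consistent_insert_neg h).exists_isMaximalConsistent
  exact ⟨Δ, (Set.subset_insert _ _).trans hsub, hΔ,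
    hΔ.neg_mem_iff.1 (hsub (Set.mem_insert _ _))⟩

/-- The formulas known by `a` according to `Γ`. The canonical accessibility relation of `a` from `Γ`
to `Δ` is `known a Γ ⊆ Δ`. -/
def known (a : Ag) (Γ : Set (Formula Ag)) : Set (Formula Ag) := {ψ | Formula.K a ψ ∈ Γ}

theorem Derivable.K_of_known (h : Derivable (known a Γ) φ) : Derivable Γ (.K a φ) := by
  induction h with
  | hyp hmem => exact .hyp hmem
  | prov hprov => exact .prov (.nec a hprov)
  | mp _ _ ih_impl ih => exact .mp (.mp (.prov (.kK a)) ih_impl) ih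

theorem known_subset_symm (hΓ : IsMaximalConsistent Γ) (hΔ : Consistent Δ)
    (h : known a Γ ⊆ Δ) : known a Δ ⊆ Γ := by
  intro ψ hψ
  by_contra hψΓ
  have hB : Formula.K a (.neg (.K a ψ.neg.neg)) ∈ Γ :=
    hΓ.mem_of_derivable (.mp (.prov (.axB a)) (.hyp (hΓ.neg_mem_iff.2 hψΓ)))
  have hK : Derivable Δ (.K a ψ.neg.neg) :=
    Derivable.K_of_known (.mp (.taut .impl_neg_neg) (.hyp hψ))
  exact hΔ.neg_notMem hK (h hB)

theorem IsMaximalConsistent.K_mem_iff (hΓ : IsMaximalConsistent Γ) :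
    Formula.K a φ ∈ Γ ↔ ∀ Δ, IsMaximalConsistent Δ → known a Γ ⊆ Δ → φ ∈ Δ := by
  refine ⟨fun h Δ _ hsub => hsub h, fun h => by_contra fun hK => ?_⟩
  have hφ : ¬ Derivable (known a Γ) φ := fun hd => hK (hΓ.mem_of_derivable hd.K_of_known)
  obtain ⟨Δ, hsub, hΔ, hφΔ⟩ := exists_isMaximalConsistent_notMem hφ
  exact hφΔ (h Δ hΔ hsub)

namespace SimModel

/-- The similarity model of a Kripke model with symmetric accessibility relations `R a`. The
abilities are the agents, agent `a` being capable of `a` alone, and an extra ability `none`, which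
no `E s t` contains. -/
def ofSymmetric {W : Type} [Nonempty W] (R : Ag → W → W → Prop)
    (hR : ∀ a s t, R a s t → R a t s) (val : W → Set ℕ) : SimModel Ag where
  W := W
  A := Option Ag
  w_nonempty := inferInstance
  E s t := Set.image some {a | R a s t}
  Cap a := {some a}
  val := val
  positivity s t h := by simpa using h.ge (Set.mem_univ none)
  symmetry s t := congrArg (Set.image some) (Set.ext fun a => ⟨hR a s t, hR a t s⟩)

theorem sat_ofSymmetric_K {W : Type} [Nonempty W] {R : Ag → W → W → Prop}
    {hR : ∀ a s t, R a s t → R a t s} {val : W → Set ℕ} {s : W} :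
    (ofSymmetric R hR val).sat s (.K a φ) ↔
      ∀ t, R a s t → (ofSymmetric R hR val).sat t φ := by
  have cap_subset_iff (t : W) : {some a} ⊆ Set.image some {b | R b s t} ↔ R a s t := by simp
  exact forall_congr' fun t => imp_congr_left (cap_subset_iff t)

end SimModel

/-- The states of the canonical model. -/
abbrev MaximalConsistentSet (Ag : Type) : Type :=
  {Γ : Set (Formula Ag) // IsMaximalConsistent Γ}

/-- The canonical model of EL, as a similarity model. -/
def canonicalModel (Ag : Type) [Nonempty (MaximalConsistentSet Ag)] : SimModel Ag :=
  .ofSymmetric (W := MaximalConsistentSet Ag) (fun a Γ Δ => known a Γ.1 ⊆ Δ.1)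
    (fun _ Γ Δ => known_subset_symm Γ.2 Δ.2.consistent) fun Γ => {p | .atom p ∈ Γ.1}

theorem sat_canonicalModel_iff_mem [Nonempty (MaximalConsistentSet Ag)]
    (Γ : MaximalConsistentSet Ag) : (canonicalModel Ag).sat Γ φ ↔ φ ∈ Γ.1 := by
  induction φ generalizing Γ with
  | atom p => exact Iff.rfl
  | neg φ ih => exact (not_congr (ih Γ)).trans Γ.2.neg_mem_iff.symm
  | impl φ ψ ihφ ihψ => exact (imp_congr (ihφ Γ) (ihψ Γ)).trans Γ.2.impl_mem_iff.symm
  | K a φ ih =>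
    calc (canonicalModel Ag).sat Γ (.K a φ)
      _ ↔ ∀ Δ : MaximalConsistentSet Ag, known a Γ.1 ⊆ Δ.1 → (canonicalModel Ag).sat Δ φ :=
        SimModel.sat_ofSymmetric_K
      _ ↔ ∀ Δ : MaximalConsistentSet Ag, known a Γ.1 ⊆ Δ.1 → φ ∈ Δ.1 :=
        forall_congr' fun Δ => imp_congr_right fun _ => ih Δ
      _ ↔ .K a φ ∈ Γ.1 := Subtype.forall.trans Γ.2.K_mem_iff.symm

theorem stmt_15_general (Φ : Set (Formula Ag)) (φ : Formula Ag)
    (h : ∀ (M : SimModel Ag) (s : M.W), (∀ ψ ∈ Φ, M.sat s ψ) → M.sat s φ) :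
    ∃ L : List (Formula Ag), (∀ ψ ∈ L, ψ ∈ Φ) ∧
      Prov ((L.foldr Formula.and Formula.top).impl φ) := by
  refine Derivable.exists_list_prov (by_contra fun hφ => ?_)
  obtain ⟨Γ, hΦ, hΓ, hφΓ⟩ := exists_isMaximalConsistent_notMem hφ
  let s : MaximalConsistentSet Ag := ⟨Γ, hΓ⟩
  have : Nonempty (MaximalConsistentSet Ag) := ⟨s⟩
  have hsat : ∀ ψ ∈ Φ, (canonicalModel Ag).sat s ψ :=
    fun ψ hψ => (sat_canonicalModel_iff_mem s).2 (hΦ hψ)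
  exact hφΓ ((sat_canonicalModel_iff_mem s).1 (h (canonicalModel Ag) s hsat))

end Completeness

/-- strong completeness of EL: if `Φ` semantically entails
`φ` over similarity models, then some finite conjunction `ψ₁ ∧ … ∧ ψₙ` of
members of `Φ` is such that `(ψ₁ ∧ … ∧ ψₙ) → φ` is a theorem of EL. -/
theorem stmt_15 {Ag : Type} [Fintype Ag] [Nonempty Ag]
    (Φ : Set (Formula Ag)) (φ : Formula Ag)
    (h : ∀ (M : SimModel Ag) (s : M.W), (∀ ψ ∈ Φ, M.sat s ψ) → M.sat s φ) :
    ∃ L : List (Formula Ag), (∀ ψ ∈ L, ψ ∈ Φ) ∧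
      Prov ((L.foldr Formula.and Formula.top).impl φ) :=
  stmt_15_general Φ φ h
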